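/- (Local optimality implies determinant lower bound.) Let $A \in \mathbb{R}^{m \times n}$, let $\lambda_1 \ge \cdots \ge \lambda_m \ge 0$ be the eigenvalues of $AA^T$, let $1 \le k \le m$, let $\epsilon > 0$, and let $S \subseteq [m]$ with $|S| = k$ and $\det(A_S A_S^T) > 0$. Suppose for all $i \in S$ and $j \notin S$ that $\det(A_{(S \setminus \{i\}) \cup \{j\}} A_{(S \setminus \{i\}) \cup \{j\}}^T) \le (1 + \epsilon/k) \det(A_S A_S^T)$. Then $\left(1 + \frac{\epsilon}{k}\right)^{-k} \left(\frac{1}{m-k+1} \sum_{t=k}^{m} \lambda_t \right)^k \le \det(A_S A_S^T)$. -/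

import Mathlib

open scoped Matrix

/-- `det(A_S A_S^T)`, i.e. the determinant of the principal submatrix `(AA^T)_{S,S}`. -/
noncomputable def subDet {m n : ℕ} (A : Matrix (Fin m) (Fin n) ℝ) (S : Finset (Fin m)) : ℝ :=
  Matrix.det ((A * Aᵀ).submatrix (fun i : {x // x ∈ S} => i.1) (fun j : {x // x ∈ S} => j.1))

/-!
Let `G = A * Aᵀ`, fix `i ∈ S` and put `T = S \ {i}`. Adding an index `j ∉ T` to `T` multiplies the
principal minor by the diagonal entry `j` of the Schur residual of `T`, and this residual vanishes
on `T`. Hence the minors on `T ∪ {j}`, summed over `j ∉ T`, give the minor on `T` times the trace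
of the residual. Writing `G = B ^ 2` with `B` Hermitian, the residual is `B * (1 - P) * B` with `P`
an orthogonal projection of rank `k - 1`, so by Ky Fan's principle its trace is at least
`∑_{t ≥ k} λ_t`. Local optimality bounds each of the `m - k + 1` minors on `T ∪ {j}`, and the minor
on `T` divided by the one on `S` is the diagonal entry `i` of `G_S⁻¹`. So `τ` times each diagonal
entry of `G_S⁻¹` is at most `1 + ε / k`, where `τ` is the mean of the tail `λ_k, …, λ_m`, and AM-GM
for the eigenvalues of `τ G_S⁻¹` turns this into the bound on the determinant.
-/

section PrincipalSubmatrix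

open Matrix

variable {ι R : Type*}

/-- The principal submatrix of `G` on the rows and columns in `S`. For `G = A * Aᵀ` this is
`A_S A_Sᵀ`. -/
abbrev principalSubmatrix (G : Matrix ι ι R) (S : Finset ι) : Matrix S S R :=
  G.submatrix (↑) (↑)

lemma adjugate_fromBlocks_inr_inr {κ : Type*} [Fintype κ] [DecidableEq κ] [CommRing R]
    (A : Matrix κ κ R) (B : Matrix κ Unit R) (C : Matrix Unit κ R) (D : Matrix Unit Unit R) :
    (fromBlocks A B C D).adjugate (.inr ()) (.inr ()) = A.det := by
  have hrow : (fromBlocks A B C D).updateRow (.inr ()) (Pi.single (.inr ()) 1) =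
      fromBlocks A B 0 1 := by
    ext (a | a) (b | b) <;> simp [updateRow_apply]
  rw [adjugate_apply, hrow, det_fromBlocks_zero₂₁, det_one, mul_one]

variable [DecidableEq ι]

/-- The elements of `insert j T` split into those of `T` and the new element `j`; it puts the
principal submatrix on `insert j T` in `2 × 2` block form. -/
def insertEquivSum {T : Finset ι} {j : ι} (hj : j ∉ T) : T ⊕ Unit ≃ ↥(insert j T) :=
  ((Finset.subtypeInsertEquivOption hj).trans (Equiv.optionEquivSumPUnit _)).symm

@[simp]
lemma insertEquivSum_inl {T : Finset ι} {j : ι} (hj : j ∉ T) (a : T) :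
    (insertEquivSum hj (.inl a) : ι) = a := by
  simp [insertEquivSum, Finset.subtypeInsertEquivOption]

@[simp]
lemma insertEquivSum_inr {T : Finset ι} {j : ι} (hj : j ∉ T) (u : Unit) :
    (insertEquivSum hj (.inr u) : ι) = j := by
  simp [insertEquivSum, Finset.subtypeInsertEquivOption]

lemma principalSubmatrix_insert (G : Matrix ι ι R) {T : Finset ι} {j : ι} (hj : j ∉ T) :
    (principalSubmatrix G (insert j T)).submatrix (insertEquivSum hj) (insertEquivSum hj) =
      fromBlocks (principalSubmatrix G T) (G.submatrix (↑) fun _ => j)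
        (G.submatrix (fun _ => j) (↑)) (G.submatrix (fun _ => j) fun _ => j) := by
  ext (a | a) (b | b) <;> simp

variable [CommRing R]

lemma adjugate_principalSubmatrix_apply_self (G : Matrix ι ι R) {S : Finset ι} (i : S) :
    (principalSubmatrix G S).adjugate i i = (principalSubmatrix G (S.erase i)).det := by
  obtain ⟨i, hi⟩ := i
  obtain ⟨T, hiT, rfl⟩ : ∃ T, i ∉ T ∧ insert i T = S :=
    ⟨S.erase i, Finset.notMem_erase i S, Finset.insert_erase hi⟩
  have hlast : insertEquivSum hiT (.inr ()) = ⟨i, hi⟩ :=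
    Subtype.ext (insertEquivSum_inr hiT ())
  rw [Finset.erase_insert hiT, ← hlast, ← submatrix_apply (principalSubmatrix G _).adjugate,
    ← adjugate_submatrix_equiv_self, principalSubmatrix_insert, adjugate_fromBlocks_inr_inr]

lemma det_mul_inv_principalSubmatrix_apply_self (G : Matrix ι ι R) {S : Finset ι}
    (hS : IsUnit (principalSubmatrix G S).det) (i : S) :
    (principalSubmatrix G S).det * (principalSubmatrix G S)⁻¹ i i =
      (principalSubmatrix G (S.erase i)).det := by
  rw [inv_def, Matrix.smul_apply, smul_eq_mul, Ring.mul_inverse_cancel_left _ _ hS,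
    adjugate_principalSubmatrix_apply_self]

/-- The residual of `G` after eliminating the rows and columns in `T`: the Schur complement of
`principalSubmatrix G T`, extended by zero to all of `ι`. -/
noncomputable def schurResidual (G : Matrix ι ι R) (T : Finset ι) : Matrix ι ι R :=
  G - G.submatrix id (fun i : T => i) * (principalSubmatrix G T)⁻¹ *
    G.submatrix (fun i : T => i) id

lemma schurResidual_apply_of_mem (G : Matrix ι ι R) {T : Finset ι}
    (hT : IsUnit (principalSubmatrix G T).det) {j : ι} (hj : j ∈ T) (l : ι) :
    schurResidual G T j l = 0 := by
  have hrow : (G.submatrix (fun i : T => i) id -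
      principalSubmatrix G T * (principalSubmatrix G T)⁻¹ * G.submatrix (fun i : T => i) id)
        ⟨j, hj⟩ l = 0 := by
    rw [mul_nonsing_inv _ hT, Matrix.one_mul, sub_self, Matrix.zero_apply]
  exact hrow

lemma det_principalSubmatrix_insert (G : Matrix ι ι R) {T : Finset ι} {j : ι} (hj : j ∉ T)
    (hT : IsUnit (principalSubmatrix G T).det) :
    (principalSubmatrix G (insert j T)).det =
      (principalSubmatrix G T).det * schurResidual G T j j := by
  let _ := invertibleOfIsUnitDet (principalSubmatrix G T) hT
  rw [← det_submatrix_equiv_self (insertEquivSum hj), principalSubmatrix_insert,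
    det_fromBlocks₁₁, invOf_eq_nonsing_inv, det_unique (n := Unit)]
  rfl

lemma sum_det_principalSubmatrix_insert [Fintype ι] (G : Matrix ι ι R) {T : Finset ι}
    (hT : IsUnit (principalSubmatrix G T).det) :
    ∑ j ∈ Tᶜ, (principalSubmatrix G (insert j T)).det =
      (principalSubmatrix G T).det * (schurResidual G T).trace := by
  have htrace : (schurResidual G T).trace = ∑ j ∈ Tᶜ, schurResidual G T j j :=
    (Finset.sum_subset (Finset.subset_univ _) fun j _ hj =>
      schurResidual_apply_of_mem G hT (by simpa using hj) j).symm
  rw [htrace, Finset.mul_sum]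
  exact Finset.sum_congr rfl fun j hj =>
    det_principalSubmatrix_insert G (Finset.mem_compl.1 hj) hT

end PrincipalSubmatrix

section ColumnProjection

open Matrix

variable {ι κ R : Type*} [Fintype ι] [Fintype κ] [DecidableEq κ] [CommRing R] [StarRing R]

/-- The orthogonal projection onto the column space of `W`, for `W` with invertible Gram matrix
`Wᴴ * W`. -/
noncomputable def columnProjection (W : Matrix ι κ R) : Matrix ι ι R := W * (Wᴴ * W)⁻¹ * Wᴴ

variable {W : Matrix ι κ R}

lemma isStarProjection_columnProjection (hW : IsUnit (Wᴴ * W).det) :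
    IsStarProjection (columnProjection W) where
  isIdempotentElem := by
    calc columnProjection W * columnProjection W
        = W * (Wᴴ * W)⁻¹ * (Wᴴ * W) * (Wᴴ * W)⁻¹ * Wᴴ := by
          simp only [columnProjection, Matrix.mul_assoc]
      _ = columnProjection W := by
          rw [nonsing_inv_mul_cancel_right _ _ hW, columnProjection]
  isSelfAdjoint := by
    simp [columnProjection, IsSelfAdjoint, star_eq_conjTranspose, conjTranspose_nonsing_inv,
      Matrix.mul_assoc]

lemma trace_columnProjection (hW : IsUnit (Wᴴ * W).det) :
    (columnProjection W).trace = Fintype.card κ := by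
  rw [columnProjection, Matrix.mul_assoc, trace_mul_comm, Matrix.mul_assoc,
    nonsing_inv_mul _ hW, trace_one]

lemma schurResidual_conjTranspose_mul_self [DecidableEq ι] {ν : Type*} [DecidableEq ν]
    (B : Matrix ι ν R) (T : Finset ν) :
    schurResidual (Bᴴ * B) T =
      Bᴴ * (1 - columnProjection (B.submatrix id fun i : T => (i : ν))) * B := by
  set W : Matrix ι T R := B.submatrix id (↑)
  calc schurResidual (Bᴴ * B) T
      = Bᴴ * B - Bᴴ * W * (Wᴴ * W)⁻¹ * (Wᴴ * B) := rfl
    _ = Bᴴ * (1 - columnProjection W) * B := by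
        simp only [columnProjection, Matrix.mul_sub, Matrix.sub_mul, Matrix.mul_one,
          Matrix.mul_assoc]

end ColumnProjection

lemma sum_le_sum_mul_of_threshold {ι : Type*} [Fintype ι] {K : Type*} [Ring K] [LinearOrder K]
    [IsStrictOrderedRing K] {w f : ι → K} {s : Finset ι} {c : K} (hw₀ : ∀ a, 0 ≤ w a)
    (hw₁ : ∀ a, w a ≤ 1) (hw : ∑ a, w a = s.card)
    (hs : ∀ a ∈ s, f a ≤ c) (hsc : ∀ a ∉ s, c ≤ f a) :
    ∑ a ∈ s, f a ≤ ∑ a, w a * f a := by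
  classical
  have hmass : ∑ a, (w a - if a ∈ s then 1 else 0) * c = 0 := by
    rw [← Finset.sum_mul, Finset.sum_sub_distrib, hw]
    simp
  have hterm (a : ι) : (w a - if a ∈ s then 1 else 0) * c ≤
      (w a - if a ∈ s then 1 else 0) * f a := by
    split_ifs with ha
    · exact mul_le_mul_of_nonpos_left (hs a ha) (sub_nonpos.2 (hw₁ a))
    · simpa using mul_le_mul_of_nonneg_left (hsc a ha) (hw₀ a)
  have hsum := Finset.sum_le_sum fun a (_ : a ∈ Finset.univ) => hterm a
  rw [hmass] at hsum
  simpa [sub_mul, Finset.sum_sub_distrib] using hsum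

section KyFan

open Matrix RCLike
open scoped ComplexOrder MatrixOrder

variable {ι 𝕜 : Type*} [Fintype ι] [DecidableEq ι] [RCLike 𝕜] {G : Matrix ι ι 𝕜}

/-- Ky Fan's minimum principle. The threshold `c` marks `s` as a set of indices of smallest
eigenvalues, which avoids choosing an ordering of the index type. -/
lemma sum_eigenvalues_le_re_trace_mul (hG : G.IsHermitian) {Q : Matrix ι ι 𝕜}
    (hQ₀ : 0 ≤ Q) (hQ₁ : Q ≤ 1) {s : Finset ι} {c : ℝ}
    (hs : ∀ a ∈ s, hG.eigenvalues a ≤ c) (hsc : ∀ a ∉ s, c ≤ hG.eigenvalues a)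
    (hQs : Q.trace = s.card) :
    ∑ a ∈ s, hG.eigenvalues a ≤ re (Q * G).trace := by
  set U : Matrix ι ι 𝕜 := hG.eigenvectorUnitary.1
  set D : Matrix ι ι 𝕜 := diagonal fun a => (hG.eigenvalues a : 𝕜)
  have hUU : Uᴴ * U = 1 := Unitary.coe_star_mul_self hG.eigenvectorUnitary
  have hspec : G = U * D * Uᴴ := hG.spectral_theorem
  have hweight₀ (a : ι) : 0 ≤ re ((Uᴴ * Q * U) a a) :=
    (nonneg_iff.1 (hQ₀.posSemidef.conjTranspose_mul_mul_same U).diag_nonneg).1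
  have hweight₁ (a : ι) : re ((Uᴴ * Q * U) a a) ≤ 1 := by
    have hdiag := ((le_iff.1 hQ₁).conjTranspose_mul_mul_same U).diag_nonneg (i := a)
    simpa [Matrix.mul_sub, Matrix.sub_mul, hUU] using (nonneg_iff.1 hdiag).1
  have hmass : ∑ a, re ((Uᴴ * Q * U) a a) = s.card := by
    have hrot : (Uᴴ * Q * U).trace = s.card := by
      rw [trace_mul_cycle, mul_eq_one_comm.1 hUU, Matrix.one_mul, hQs]
    simpa [trace] using congrArg re hrot
  have htrace : (Q * G).trace = (Uᴴ * Q * U * D).trace := by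
    conv_lhs => rw [hspec, ← Matrix.mul_assoc, trace_mul_comm]
    simp only [Matrix.mul_assoc]
  calc ∑ a ∈ s, hG.eigenvalues a
      ≤ ∑ a, re ((Uᴴ * Q * U) a a) * hG.eigenvalues a :=
        sum_le_sum_mul_of_threshold hweight₀ hweight₁ hmass hs hsc
    _ = re (Q * G).trace := by rw [htrace]; simp [trace, D, mul_diagonal]

lemma sum_eigenvalues_le_re_trace_schurResidual (hG : G.PosSemidef) {T : Finset ι}
    (hT : IsUnit (principalSubmatrix G T).det) {s : Finset ι} {c : ℝ}
    (hs : ∀ a ∈ s, hG.isHermitian.eigenvalues a ≤ c)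
    (hsc : ∀ a ∉ s, c ≤ hG.isHermitian.eigenvalues a)
    (hcard : s.card = Tᶜ.card) :
    ∑ a ∈ s, hG.isHermitian.eigenvalues a ≤ re (schurResidual G T).trace := by
  set B := CFC.sqrt G
  have hB : Bᴴ = B := (CFC.sqrt_nonneg G).posSemidef.isHermitian
  have hBB : B * B = G := CFC.sqrt_mul_sqrt_self G hG.nonneg
  set W : Matrix ι T 𝕜 := B.submatrix id (↑)
  have hW : IsUnit (Wᴴ * W).det := by
    have hgram : Wᴴ * W = principalSubmatrix (Bᴴ * B) T := rfl
    rwa [hgram, hB, hBB]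
  have hP := isStarProjection_columnProjection hW
  have htrace : (1 - columnProjection W).trace = (s.card : 𝕜) := by
    rw [trace_sub, trace_columnProjection hW, trace_one, hcard, Fintype.card_coe,
      Finset.card_compl, Nat.cast_sub T.card_le_univ]
  have hres : (schurResidual G T).trace = ((1 - columnProjection W) * G).trace := by
    conv_lhs => rw [← hBB]
    nth_rw 1 [← hB]
    rw [schurResidual_conjTranspose_mul_self, hB, trace_mul_cycle, hBB, trace_mul_comm]
  rw [hres]
  exact sum_eigenvalues_le_re_trace_mul hG.isHermitian hP.one_sub.nonneg
    (sub_le_self _ hP.nonneg) hs hsc htrace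

end KyFan

lemma prod_le_pow_card_of_sum_le {ι : Type*} [Fintype ι] {z : ι → ℝ} (hz : ∀ i, 0 ≤ z i) {c : ℝ}
    (hsum : ∑ i, z i ≤ Fintype.card ι * c) : ∏ i, z i ≤ c ^ Fintype.card ι := by
  rcases isEmpty_or_nonempty ι with _ | _
  · simp
  have hcard : (0 : ℝ) < Fintype.card ι := by exact_mod_cast Fintype.card_pos
  have hamgm : (∏ i, z i) ^ (Fintype.card ι : ℝ)⁻¹ ≤ (∑ i, z i) / Fintype.card ι := by
    simpa using Real.geom_mean_le_arith_mean Finset.univ (fun _ => 1) z (by simp)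
      (by simpa using hcard) fun i _ => hz i
  have hprod : 0 ≤ ∏ i, z i := Finset.prod_nonneg fun i _ => hz i
  calc ∏ i, z i = ((∏ i, z i) ^ (Fintype.card ι : ℝ)⁻¹) ^ Fintype.card ι :=
        (Real.rpow_inv_natCast_pow hprod Fintype.card_ne_zero).symm
    _ ≤ c ^ Fintype.card ι := by
        gcongr
        exact hamgm.trans (by rwa [div_le_iff₀' hcard])

section LocalOptimality

open Matrix RCLike
open scoped ComplexOrder

variable {ι 𝕜 : Type*} [RCLike 𝕜] {G : Matrix ι ι 𝕜}

lemma posDef_principalSubmatrix_mono {S T : Finset ι} (hTS : T ⊆ S)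
    (hS : (principalSubmatrix G S).PosDef) : (principalSubmatrix G T).PosDef :=
  hS.submatrix (e := Set.inclusion hTS) (Set.inclusion_injective hTS)

variable [Fintype ι] [DecidableEq ι]

lemma re_det_le_pow_of_diag_le (hG : G.PosSemidef) {c : ℝ} (hdiag : ∀ i, re (G i i) ≤ c) :
    re G.det ≤ c ^ Fintype.card ι := by
  have htrace : ∑ i, hG.isHermitian.eigenvalues i ≤ Fintype.card ι * c := by
    calc ∑ i, hG.isHermitian.eigenvalues i = re G.trace := by
          rw [hG.isHermitian.trace_eq_sum_eigenvalues, ← ofReal_sum, ofReal_re]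
      _ = ∑ i, re (G i i) := by simp [trace]
      _ ≤ Fintype.card ι * c := by
          simpa using Finset.sum_le_card_nsmul Finset.univ _ c fun i _ => hdiag i
  rw [hG.isHermitian.det_eq_prod_eigenvalues, ← ofReal_prod, ofReal_re]
  exact prod_le_pow_card_of_sum_le hG.eigenvalues_nonneg htrace

lemma ofReal_re_det_of_isHermitian (hG : G.IsHermitian) : (re G.det : 𝕜) = G.det := by
  rw [hG.det_eq_prod_eigenvalues, ← ofReal_prod, ofReal_re]

lemma sum_eigenvalues_mul_re_inv_apply_self_le (hG : G.PosSemidef) {S : Finset ι}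
    (hS : (principalSubmatrix G S).PosDef) {δ : ℝ} {i : S}
    (hswap : ∀ j ∉ S.erase i, re (principalSubmatrix G (insert j (S.erase i))).det ≤
      δ * re (principalSubmatrix G S).det)
    {s : Finset ι} {c : ℝ} (hs : ∀ a ∈ s, hG.isHermitian.eigenvalues a ≤ c)
    (hsc : ∀ a ∉ s, c ≤ hG.isHermitian.eigenvalues a) (hcard : s.card = (S.erase i)ᶜ.card) :
    (∑ a ∈ s, hG.isHermitian.eigenvalues a) * re ((principalSubmatrix G S)⁻¹ i i) ≤
      s.card * δ := by
  set T := S.erase i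
  have hT : (principalSubmatrix G T).PosDef :=
    posDef_principalSubmatrix_mono (Finset.erase_subset i.1 S) hS
  have hSdet : 0 < re (principalSubmatrix G S).det := (pos_iff.1 hS.det_pos).1
  have hTdet : 0 < re (principalSubmatrix G T).det := (pos_iff.1 hT.det_pos).1
  have hinv : re (principalSubmatrix G S).det * re ((principalSubmatrix G S)⁻¹ i i) =
      re (principalSubmatrix G T).det := by
    rw [← re_ofReal_mul, ofReal_re_det_of_isHermitian hS.isHermitian,
      det_mul_inv_principalSubmatrix_apply_self G hS.det_pos.ne'.isUnit]
  refine le_of_mul_le_mul_left ?_ hSdet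
  calc re (principalSubmatrix G S).det *
        ((∑ a ∈ s, hG.isHermitian.eigenvalues a) * re ((principalSubmatrix G S)⁻¹ i i))
      = re (principalSubmatrix G T).det * ∑ a ∈ s, hG.isHermitian.eigenvalues a := by
        rw [← hinv]; ring
    _ ≤ re (principalSubmatrix G T).det * re (schurResidual G T).trace := by
        gcongr
        exact sum_eigenvalues_le_re_trace_schurResidual hG hT.det_pos.ne'.isUnit hs hsc hcard
    _ = ∑ j ∈ Tᶜ, re (principalSubmatrix G (insert j T)).det := by
        rw [← re_ofReal_mul, ofReal_re_det_of_isHermitian hT.isHermitian,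
          ← sum_det_principalSubmatrix_insert G hT.det_pos.ne'.isUnit, map_sum]
    _ ≤ Tᶜ.card • (δ * re (principalSubmatrix G S).det) :=
        Finset.sum_le_card_nsmul _ _ _ fun j hj => hswap j (Finset.mem_compl.1 hj)
    _ = re (principalSubmatrix G S).det * (s.card * δ) := by
        rw [hcard, nsmul_eq_mul]; ring

lemma pow_le_pow_mul_re_det_of_mul_re_inv_apply_self_le (hG : G.PosDef) {x δ : ℝ} (hx : 0 ≤ x)
    (hdiag : ∀ i, x * re (G⁻¹ i i) ≤ δ) :
    x ^ Fintype.card ι ≤ δ ^ Fintype.card ι * re G.det := by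
  have hdet : re (x • G⁻¹).det = x ^ Fintype.card ι * (re G.det)⁻¹ := by
    rw [det_smul_of_tower, smul_re, det_nonsing_inv, Ring.inverse_eq_inv',
      ← ofReal_re_det_of_isHermitian hG.isHermitian, ← ofReal_inv, ofReal_re, ofReal_re]
  have hbound := re_det_le_pow_of_diag_le (hG.inv.posSemidef.smul hx) (c := δ)
    fun i => by simpa [smul_re] using hdiag i
  rwa [hdet, ← div_eq_mul_inv, div_le_iff₀ (pos_iff.1 hG.det_pos).1] at hbound

lemma mean_eigenvalues_pow_le_of_swap_le (hG : G.PosSemidef) {S : Finset ι}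
    (hS : (principalSubmatrix G S).PosDef) {δ : ℝ} (hδ : 1 ≤ δ)
    (hswap : ∀ i ∈ S, ∀ j ∉ S, re (principalSubmatrix G (insert j (S.erase i))).det ≤
      δ * re (principalSubmatrix G S).det)
    {s : Finset ι} {c : ℝ} (hs : ∀ a ∈ s, hG.isHermitian.eigenvalues a ≤ c)
    (hsc : ∀ a ∉ s, c ≤ hG.isHermitian.eigenvalues a)
    (hcard : s.card + S.card = Fintype.card ι + 1) :
    ((∑ a ∈ s, hG.isHermitian.eigenvalues a) / s.card) ^ S.card ≤
      δ ^ S.card * re (principalSubmatrix G S).det := by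
  have hscard : 0 < s.card := by have := S.card_le_univ; lia
  have hdiag (i : S) : (∑ a ∈ s, hG.isHermitian.eigenvalues a) / s.card *
      re ((principalSubmatrix G S)⁻¹ i i) ≤ δ := by
    have hswap_erase : ∀ j ∉ S.erase i, re (principalSubmatrix G (insert j (S.erase i))).det ≤
        δ * re (principalSubmatrix G S).det := by
      intro j hj
      by_cases hjS : j ∈ S
      · obtain rfl : j = i := by simpa [hjS] using hj
        rw [Finset.insert_erase hjS]
        exact le_mul_of_one_le_left (pos_iff.1 hS.det_pos).1.le hδ
      · exact hswap i i.2 j hjS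
    have hcompl : s.card = (S.erase i)ᶜ.card := by
      have := Finset.card_erase_add_one i.2
      rw [Finset.card_compl]
      lia
    rw [div_mul_eq_mul_div, div_le_iff₀' (by exact_mod_cast hscard)]
    exact sum_eigenvalues_mul_re_inv_apply_self_le hG hS hswap_erase hs hsc hcompl
  have hmean : 0 ≤ (∑ a ∈ s, hG.isHermitian.eigenvalues a) / s.card :=
    div_nonneg (Finset.sum_nonneg fun a _ => hG.eigenvalues_nonneg a) (Nat.cast_nonneg _)
  simpa using pow_le_pow_mul_re_det_of_mul_re_inv_apply_self_le hS hmean hdiag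

theorem statement14_general {m : ℕ} (hG : G.PosSemidef) (e : Fin m ≃ ι)
    (hanti : Antitone fun t => hG.isHermitian.eigenvalues (e t)) {S : Finset ι}
    (hS : 0 < re (principalSubmatrix G S).det) {δ : ℝ} (hδ : 1 ≤ δ)
    (hswap : ∀ i ∈ S, ∀ j ∉ S, re (principalSubmatrix G (insert j (S.erase i))).det ≤
      δ * re (principalSubmatrix G S).det) :
    (δ ^ S.card)⁻¹ *
        ((∑ t ∈ Finset.univ.filter (fun t : Fin m => S.card ≤ (t : ℕ) + 1),
          hG.isHermitian.eigenvalues (e t)) / (m - S.card + 1 : ℕ)) ^ S.card ≤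
      re (principalSubmatrix G S).det := by
  rcases S.eq_empty_or_nonempty with rfl | hne
  · simp
  have hSpd : (principalSubmatrix G S).PosDef :=
    (hG.submatrix _).posDef_iff_det_ne_zero.2 fun h => by simp [h] at hS
  have hk : 0 < S.card := hne.card_pos
  have hm : Fintype.card ι = m := by simp [Fintype.card_congr e.symm]
  have hkm : S.card ≤ m := hm ▸ S.card_le_univ
  let t₀ : Fin m := ⟨S.card - 1, by lia⟩
  have htail : Finset.univ.filter (fun t : Fin m => S.card ≤ (t : ℕ) + 1) = Finset.Ici t₀ := by
    ext t; simp [t₀, Fin.le_def]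
  have hcard : (Finset.Ici t₀).card = m - S.card + 1 := by simp only [Fin.card_Ici, t₀]; lia
  have hmean := mean_eigenvalues_pow_le_of_swap_le hG hSpd hδ hswap
    (s := (Finset.Ici t₀).map e.toEmbedding) (c := hG.isHermitian.eigenvalues (e t₀))
    (by simpa [e.surjective.forall] using fun t ht => hanti ht)
    (by simpa [e.surjective.forall] using fun t ht => hanti (le_of_lt ht))
    (by rw [Finset.card_map, hcard]; lia)
  rw [inv_mul_le_iff₀ (by positivity), htail, ← hcard]
  simpa using hmean

end LocalOptimality

/-- local optimality implies determinant lower bound: let `λ₁ ≥ ⋯ ≥ λ_m ≥ 0`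
be the eigenvalues of `AA^T` (here `lam`, an antitone enumeration of the eigenvalues),
`1 ≤ k ≤ m`, `ε > 0`, and `S` with `|S| = k`, `det(A_S A_S^T) > 0`. If every single-element
swap improves the determinant by at most a `(1 + ε/k)` factor, then
`(1 + ε/k)⁻ᵏ ((1/(m-k+1)) ∑_{t=k}^m λ_t)ᵏ ≤ det(A_S A_S^T)`. -/
theorem statement14 {m n : ℕ} (A : Matrix (Fin m) (Fin n) ℝ)
    (hH : (A * Aᵀ).IsHermitian)
    (lam : Fin m → ℝ) (hmono : Antitone lam) (hnn : ∀ t, 0 ≤ lam t)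
    (hperm : ∃ σ : Equiv.Perm (Fin m), ∀ t, lam t = hH.eigenvalues (σ t))
    (k : ℕ) (hk1 : 1 ≤ k) (hk2 : k ≤ m) (ε : ℝ) (hε : 0 < ε)
    (S : Finset (Fin m)) (hS : S.card = k) (hpos : 0 < subDet A S)
    (hloc : ∀ i ∈ S, ∀ j ∉ S,
      subDet A (insert j (S.erase i)) ≤ (1 + ε / k) * subDet A S) :
    ((1 + ε / k) ^ k)⁻¹ *
        ((∑ t ∈ Finset.univ.filter (fun t : Fin m => k ≤ (t : ℕ) + 1), lam t)
          / ((m - k + 1 : ℕ) : ℝ)) ^ k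
      ≤ subDet A S := by
  subst hS
  obtain ⟨σ, hσ⟩ := hperm
  obtain rfl := funext hσ
  exact statement14_general (Matrix.posSemidef_self_mul_conjTranspose A) σ hmono hpos
    (le_add_of_nonneg_right (by positivity)) hloc
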